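/- arXiv:1905.13585 — 2 statements merged into one kernel-verified Lean document; each statement's English description precedes it below -/
import Mathlib

section
/- For every a_0, a_1, ..., a_{r-1} ∈ A and every i with 0 ≤ i ≤ r-1, one has G^{-i}( ∑_{l=0}^{r-1} h^l · π^*(a_l) ) = a_i. In other words, the map B → A^r sending x to (G^{0}(x), G^{-1}(x), ..., G^{-(r-1)}(x)) is a left inverse of the map A^r → B sending (a_0, ..., a_{r-1}) to ∑_{l=0}^{r-1} h^l · π^*(a_l). -/
/-- `Q r j` is the polynomial `P_{r-1-j}` of the downward recursion:
`P_{r-1} = (-1)^{r-1}` and for `0 ≤ i < r-1`,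
`P_i = (-1)^r · ∑_{k=1}^{r-1-i} T_k · P_{k+i}`, where `T_k` is the
variable `MvPolynomial.X k`. -/
noncomputable def Q (r : ℕ) : ℕ → MvPolynomial ℕ ℤ
  | 0 => (-1) ^ (r - 1)
  | (j + 1) => (-1) ^ r * ∑ k ∈ Finset.range (j + 1), MvPolynomial.X (k + 1) * Q r (j - k)
  termination_by j => j
  decreasing_by omega

/-- The polynomial `P_i` in `ℤ[T_1, …, T_{r-1}]`. -/
noncomputable def P (r i : ℕ) : MvPolynomial ℕ ℤ := Q r (r - 1 - i)

/-- The evaluations of `Q r` at `t` are the coefficients of the inverse of the power series with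
coefficients `t`, provided `t 0 = (-1) ^ (r - 1)`. -/
theorem sum_aeval_Q_mul (r : ℕ) (hr : 1 ≤ r) {A : Type*} [CommRing A] (t : ℕ → A)
    (ht : t 0 = (-1) ^ (r - 1)) (m : ℕ) :
    ∑ k ∈ Finset.range (m + 1), MvPolynomial.aeval (R := ℤ) t (Q r (m - k)) * t k =
      if m = 0 then 1 else 0 := by
  obtain ⟨n, rfl⟩ : ∃ n, r = n + 1 := ⟨r - 1, by omega⟩
  rw [Nat.add_sub_cancel] at ht
  have hsq : ((-1 : A) ^ n) * (-1) ^ n = 1 := by rw [← mul_pow]; simp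
  cases m with
  | zero => simp [Q, ht, hsq]
  | succ m =>
    rw [Finset.sum_range_succ', Nat.sub_zero, Q, ht]
    simp only [Nat.add_sub_add_right, map_mul, map_pow, map_neg, map_one, map_sum,
      MvPolynomial.aeval_X]
    rw [pow_succ, mul_right_comm, mul_right_comm _ (-1 : A), hsq]
    simp [mul_comm]

/-- Orthogonality: if `s` vanishes below `r - 1`, the convolution of `Q r` with `s` shifted by `l`
detects whether `l = i`. -/
theorem sum_aeval_P_mul (r : ℕ) (hr : 1 ≤ r) {A : Type*} [CommRing A] (s : ℕ → A)
    (hlow : ∀ i < r - 1, s i = 0) (htop : s (r - 1) = (-1) ^ (r - 1))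
    {i l : ℕ} (hi : i ≤ r - 1) (hl : l ≤ r - 1) :
    ∑ j ∈ Finset.range (r - 1 - i + 1),
      MvPolynomial.aeval (R := ℤ) (fun k => s (r - 1 + k)) (P r (i + j)) * s (j + l) =
      if l = i then 1 else 0 := by
  rcases lt_or_ge l i with hli | hil
  · rw [if_neg hli.ne]
    refine Finset.sum_eq_zero fun j hj => ?_
    rw [Finset.mem_range] at hj
    rw [hlow _ (by omega), mul_zero]
  · rw [show r - 1 - i + 1 = (r - 1 - l) + (l - i + 1) by omega, Finset.sum_range_add,
      Finset.sum_eq_zero, zero_add]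
    · rw [← if_congr (show l - i = 0 ↔ l = i by omega) rfl rfl,
        ← sum_aeval_Q_mul r hr (fun k => s (r - 1 + k)) htop]
      refine Finset.sum_congr rfl fun k _ => ?_
      rw [P, show r - 1 - (i + (r - 1 - l + k)) = l - i - k by omega,
        show r - 1 - l + k + l = r - 1 + k by omega]
    · intro j hj
      rw [Finset.mem_range] at hj
      rw [hlow _ (by omega), mul_zero]

/-- Abstract algebraic content of the inverse of the projective bundle formula.
Let `π^* : A → B` be a ring homomorphism and `π_* : B → A` an additive map
satisfying the projection formula, and let `h ∈ B` with `π_*(h^i) = 0` for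
`0 ≤ i ≤ r-2` and `π_*(h^{r-1}) = (-1)^{r-1}`.  With
`G^{-i}(x) = ∑_{j=0}^{r-1-i} P_{i+j}(π_*(h^r), …, π_*(h^{2r-2})) · π_*(h^j·x)`,
one has `G^{-i}(∑_{l=0}^{r-1} h^l·π^*(a_l)) = a_i` for `0 ≤ i ≤ r-1`. -/
theorem stmt3 (r : ℕ) (hr : 1 ≤ r) {A B : Type*} [CommRing A] [CommRing B]
    (πpull : A →+* B) (πpush : B →+ A)
    (proj : ∀ (a : A) (b : B), πpush (πpull a * b) = a * πpush b)
    (h : B)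
    (hlow : ∀ i : ℕ, i < r - 1 → πpush (h ^ i) = 0)
    (htop : πpush (h ^ (r - 1)) = (-1) ^ (r - 1))
    (a : ℕ → A) (i : ℕ) (hi : i ≤ r - 1) :
    ∑ j ∈ Finset.range (r - 1 - i + 1),
        MvPolynomial.aeval (R := ℤ) (fun k => πpush (h ^ (r - 1 + k))) (P r (i + j)) *
          πpush (h ^ j * ∑ l ∈ Finset.range r, h ^ l * πpull (a l)) = a i := by
  have hpush (j : ℕ) : πpush (h ^ j * ∑ l ∈ Finset.range r, h ^ l * πpull (a l)) =
      ∑ l ∈ Finset.range r, a l * πpush (h ^ (j + l)) := by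
    rw [Finset.mul_sum, map_sum]
    refine Finset.sum_congr rfl fun l _ => ?_
    rw [← proj, ← mul_assoc, ← pow_add, mul_comm]
  simp only [hpush]
  simp only [Finset.mul_sum, mul_left_comm _ (a _)]
  rw [Finset.sum_comm]
  simp only [← Finset.mul_sum]
  have hinner : ∀ l ∈ Finset.range r, _ = a l * if l = i then 1 else 0 := fun l hl =>
    congrArg (a l * ·) (sum_aeval_P_mul r hr (fun n => πpush (h ^ n)) hlow htop hi
      (Nat.le_sub_one_of_lt (Finset.mem_range.mp hl)))
  rw [Finset.sum_congr rfl hinner]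
  simp only [mul_ite, mul_one, mul_zero, Finset.sum_ite_eq', Finset.mem_range]
  exact if_pos (by omega)
end

section
/- Define B : ℤ → ℕ by B(k) = ∑_{m+n=k} b(m)·c(n) and H : ℤ×ℤ → ℕ by H(p,q) = ∑_{r+u=p, s+v=q} h(r,s)·g(u,v). Then B(k) = ∑_{p+q=k} H(p,q) holds for every integer k if and only if both b(k) = ∑_{p+q=k} h(p,q) and c(k) = ∑_{p+q=k} g(p,q) hold for every integer k. -/
/-- The sum of `h` over the antidiagonal `p + q = k` is the value at `k` of the pushforward of `h`
under addition. -/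
theorem finsum_antidiagonal_eq_mapDomain (h : ℤ × ℤ →₀ ℕ) (k : ℤ) :
    ∑ᶠ p : ℤ, h (p, k - p) = h.mapDomain (fun x => x.1 + x.2) k := by
  have finite_support (f : ℤ × ℤ →₀ ℕ) : (Function.support fun p : ℤ => f (p, k - p)).Finite :=
    f.hasFiniteSupport.preimage (f := fun p : ℤ => (p, k - p))
      (fun a _ b _ hab => congrArg Prod.fst hab)
  induction h using Finsupp.induction_linear with
  | zero => simp
  | add f g hf hg =>
    simp only [Finsupp.add_apply, Finsupp.mapDomain_add]
    rw [finsum_add_distrib (finite_support f) (finite_support g), hf, hg]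
  | single x a =>
    rw [Finsupp.mapDomain_single, finsum_eq_single _ x.1]
    · simp only [Finsupp.single_apply, Prod.ext_iff, true_and]
      congr 1
      exact propext ⟨fun e => by omega, fun e => by omega⟩
    · intro p hp
      exact Finsupp.single_eq_of_ne fun e => hp (congrArg Prod.fst e)

theorem finsum_mul_eq_sum {α : Type*} (f : α →₀ ℕ) (F : α → ℕ) :
    ∑ᶠ x, f x * F x = f.sum fun x a => a * F x :=
  finsum_eq_sum_of_support_subset _ fun x hx => by
    simpa using left_ne_zero_of_mul hx

/-- Taking antidiagonal sums turns convolution on `ℤ × ℤ` into convolution on `ℤ`. -/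
theorem finsum_antidiagonal_convolution (h g : ℤ × ℤ →₀ ℕ) (k : ℤ) :
    ∑ᶠ p : ℤ, ∑ᶠ x : ℤ × ℤ, h x * g (p - x.1, (k - p) - x.2) =
      ∑ᶠ m : ℤ, h.mapDomain (fun x => x.1 + x.2) m *
        g.mapDomain (fun x => x.1 + x.2) (k - m) := by
  simp_rw [finsum_mul_eq_sum]
  rw [Finsupp.sum_mapDomain_index (by simp) (by intros; ring)]
  simp only [Finsupp.sum]
  have finite_support (x : ℤ × ℤ) :
      (Function.support fun p : ℤ => g (p - x.1, k - p - x.2)).Finite :=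
    g.hasFiniteSupport.preimage (f := fun p : ℤ => (p - x.1, k - p - x.2))
      (fun a _ b _ hab => sub_left_injective (congrArg Prod.fst hab))
  rw [finsum_sum_comm _ _ fun x _ => (finite_support x).subset fun p hp =>
    right_ne_zero_of_mul hp]
  refine Finset.sum_congr rfl fun x _ => ?_
  rw [← mul_finsum, ← finsum_antidiagonal_eq_mapDomain,
    ← finsum_comp_equiv (Equiv.addRight x.1)]
  congr 1
  refine finsum_congr fun p => ?_
  simp only [Equiv.coe_addRight, add_sub_cancel_right]
  congr 2
  ring

/-- For `b ≤ b'` and `c ≤ c'`, equality of the convolutions of `b, c` and of `b', c'` is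
equality of all the individual products. -/
theorem mul_eq_mul_of_convolution_eq {b c b' c' : ℤ →₀ ℕ} (hb : ∀ k, b k ≤ b' k)
    (hc : ∀ k, c k ≤ c' k) {k : ℤ}
    (H : ∑ᶠ m : ℤ, b m * c (k - m) = ∑ᶠ m : ℤ, b' m * c' (k - m)) (m : ℤ) :
    b m * c (k - m) = b' m * c' (k - m) := by
  have support_le : b.support ⊆ b'.support := fun m hm => by
    have := hb m
    simp only [Finsupp.mem_support_iff] at hm ⊢
    omega
  rw [finsum_mul_eq_sum, finsum_mul_eq_sum, Finsupp.sum_of_support_subset b support_le _ (by simp),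
    Finsupp.sum, Finset.sum_eq_sum_iff_of_le fun i _ => Nat.mul_le_mul (hb i) (hc _)] at H
  by_cases hm : m ∈ b'.support
  · exact H m hm
  · have bb_zero : b' m = 0 := by simpa using hm
    have b_zero : b m = 0 := Nat.le_zero.mp (bb_zero ▸ hb m)
    rw [b_zero, bb_zero, zero_mul, zero_mul]

/-- Numerical content, via the Künneth theorem, of Lemma 5.4 (E₁-degeneration
for a product).  Let `b, c : ℤ → ℕ` and `h, g : ℤ×ℤ → ℕ` be finitely supported
with `b(k) ≤ ∑_{p+q=k} h(p,q)`, `c(k) ≤ ∑_{p+q=k} g(p,q)` for all `k`, and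
`b(0) ≥ 1`, `c(0) ≥ 1`.  Set `B(k) = ∑_{m+n=k} b(m)·c(n)` and
`H(p,q) = ∑_{r+u=p, s+v=q} h(r,s)·g(u,v)`.  Then `B(k) = ∑_{p+q=k} H(p,q)` for
all `k` iff both `b(k) = ∑_{p+q=k} h(p,q)` and `c(k) = ∑_{p+q=k} g(p,q)` hold
for all `k`. -/
theorem stmt7 (b c : ℤ →₀ ℕ) (h g : ℤ × ℤ →₀ ℕ)
    (hb : ∀ k : ℤ, b k ≤ ∑ᶠ p : ℤ, h (p, k - p))
    (hc : ∀ k : ℤ, c k ≤ ∑ᶠ p : ℤ, g (p, k - p))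
    (hb0 : 1 ≤ b 0) (hc0 : 1 ≤ c 0) :
    (∀ k : ℤ, (∑ᶠ m : ℤ, b m * c (k - m)) =
        ∑ᶠ p : ℤ, ∑ᶠ x : ℤ × ℤ, h x * g (p - x.1, (k - p) - x.2)) ↔
    ((∀ k : ℤ, b k = ∑ᶠ p : ℤ, h (p, k - p)) ∧
      (∀ k : ℤ, c k = ∑ᶠ p : ℤ, g (p, k - p))) := by
  simp_rw [finsum_antidiagonal_convolution, finsum_antidiagonal_eq_mapDomain] at hb hc ⊢
  refine ⟨fun H => ⟨fun k => (hb k).antisymm ?_, fun k => (hc k).antisymm ?_⟩, ?_⟩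
  · have e := mul_eq_mul_of_convolution_eq hb hc (H k) k
    rw [sub_self] at e
    exact Nat.le_of_mul_le_mul_right (e ▸ Nat.mul_le_mul_left _ (hc 0)) hc0
  · have e := mul_eq_mul_of_convolution_eq hb hc (H k) 0
    rw [sub_zero] at e
    exact Nat.le_of_mul_le_mul_left (e ▸ Nat.mul_le_mul_right _ (hb 0)) hb0
  · rintro ⟨eb, ec⟩ k
    simp_rw [eb, ec]
end
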